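/- A Fermat real is invertible if and only if its standard part is nonzero (so the non-units of the ring of Fermat reals are exactly the infinitesimals D∞, which form the unique maximal ideal): let x : ℝ → ℝ be a little-oh polynomial. Then the standard part of x is nonzero if and only if there exists a little-oh polynomial y : ℝ → ℝ such that x(t)·y(t) − 1 = o(t) as t → 0⁺. -/

import Mathlib

/-!
Invertibility is a truncated geometric series. Write `x = r + h + o(t)` with
`h = ∑ αᵢ t ^ aᵢ`, `aᵢ > 0`. If `r ≠ 0`, put `y = r⁻¹ ∑_{j < N} (-h / r) ^ j`; then
`(r + h) y = 1 - (-h / r) ^ N`. Since `h = O(t ^ m)` for some `m > 0` below all the exponents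
(`exists_pos_isBigO_rpow`), the error `h ^ N` is `o(t)` as soon as `m * N > 1`. That `y` is again a
little-oh polynomial holds because functions on `(0, ∞)` which are combinations of powers `t ^ a`
with `a ≥ 0` form an algebra (`rpowAlgebra`, `isLittleOhPoly_of_mem_rpowAlgebra`).
Conversely, `y` has a finite limit at `0⁺`, so `r = 0` would force `x y → 0`, against `x y → 1`.
-/

open Filter Asymptotics Topology

/-- A function `x : ℝ → ℝ` is a little-oh polynomial if there are `r`, coefficients `α i`
and positive exponents `a i` such that `x t - r - ∑ i, α i * t ^ (a i)` is `o(t)` as `t → 0⁺`. -/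
def IsLittleOhPoly (x : ℝ → ℝ) : Prop :=
  ∃ (r : ℝ) (k : ℕ) (α : Fin k → ℝ) (a : Fin k → ℝ),
    (∀ i, 0 < a i) ∧
    (fun t => x t - r - ∑ i, α i * t ^ (a i)) =o[𝓝[>] (0 : ℝ)] fun t => t

/-- The real powers `t ^ a` with `a ≥ 0`, as a multiplicative submonoid of the functions
on `(0, ∞)`. Restricting to positive `t` makes `t ^ a * t ^ b = t ^ (a + b)` hold exactly. -/
def rpowMonoid : Submonoid (Set.Ioi (0 : ℝ) → ℝ) where
  carrier := {f | ∃ a : ℝ, 0 ≤ a ∧ f = fun t : Set.Ioi (0 : ℝ) => (t : ℝ) ^ a}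
  one_mem' := ⟨0, le_rfl, by ext t; simp⟩
  mul_mem' := by
    rintro _ _ ⟨a, ha, rfl⟩ ⟨b, hb, rfl⟩
    exact ⟨a + b, add_nonneg ha hb, by ext t; exact (Real.rpow_add t.2 a b).symm⟩

/-- The algebra of finite linear combinations of powers `t ^ a`, `a ≥ 0`, on `(0, ∞)`. -/
def rpowAlgebra : Subalgebra ℝ (Set.Ioi (0 : ℝ) → ℝ) :=
  Algebra.adjoin ℝ (rpowMonoid : Set (Set.Ioi (0 : ℝ) → ℝ))

lemma rpow_mem_rpowAlgebra {a : ℝ} (ha : 0 ≤ a) :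
    (fun t : Set.Ioi (0 : ℝ) => (t : ℝ) ^ a) ∈ rpowAlgebra :=
  Algebra.subset_adjoin ⟨a, ha, rfl⟩

lemma isLittleOhPoly_of_mem_rpowAlgebra {y : ℝ → ℝ}
    (hy : (fun t : Set.Ioi (0 : ℝ) => y t) ∈ rpowAlgebra) : IsLittleOhPoly y := by
  rw [rpowAlgebra, ← Subalgebra.mem_toSubmodule, Algebra.adjoin_eq_span,
    Submonoid.closure_eq, Submodule.mem_span_set'] at hy
  obtain ⟨n, c, g, hg⟩ := hy
  choose a ha hga using fun i => (g i).2
  -- Exponents equal to `0` are collected into the constant term; the corresponding summands are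
  -- kept with coefficient `0` and the dummy exponent `1`.
  refine ⟨∑ i, if a i = 0 then c i else 0, n, fun i => if a i = 0 then 0 else c i,
    fun i => if a i = 0 then 1 else a i, fun i => ?_, ?_⟩
  · dsimp only
    split_ifs with h
    · exact one_pos
    · exact lt_of_le_of_ne (ha i) (Ne.symm h)
  · refine (isLittleO_zero _ _).congr' ?_ EventuallyEq.rfl
    filter_upwards [self_mem_nhdsWithin] with t ht
    have h := congrFun hg ⟨t, ht⟩
    simp only [Finset.sum_apply, Pi.smul_apply, hga, smul_eq_mul] at h
    rw [← h, sub_sub, ← Finset.sum_add_distrib, ← Finset.sum_sub_distrib]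
    refine (Finset.sum_eq_zero fun i _ => ?_).symm
    split_ifs with h0 <;> simp [h0]

lemma exists_pos_isBigO_rpow {k : ℕ} (α a : Fin k → ℝ) (ha : ∀ i, 0 < a i) :
    ∃ m : ℝ, 0 < m ∧
      (fun t : ℝ => ∑ i, α i * t ^ (a i)) =O[𝓝[>] (0 : ℝ)] fun t => t ^ m := by
  obtain ⟨m, hm0, hm⟩ : ∃ m : ℝ, 0 < m ∧ ∀ i, m < a i := by
    have h1 : ∀ᶠ m in 𝓝[>] (0 : ℝ), ∀ i, m < a i :=
      eventually_all.2 fun i => mem_of_superset (Ioo_mem_nhdsGT (ha i)) fun _ h => h.2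
    have h0 : ∀ᶠ m in 𝓝[>] (0 : ℝ), 0 < m := self_mem_nhdsWithin
    exact (h0.and h1).exists
  refine ⟨m, hm0, IsBigO.fun_sum fun i _ => IsBigO.const_mul_left ?_ _⟩
  refine IsBigO.of_bound 1 ?_
  filter_upwards [Ioo_mem_nhdsGT (zero_lt_one' ℝ)] with t ht
  rw [one_mul, Real.norm_of_nonneg (Real.rpow_nonneg ht.1.le _),
    Real.norm_of_nonneg (Real.rpow_nonneg ht.1.le _)]
  exact Real.rpow_le_rpow_of_exponent_ge ht.1 ht.2.le (hm i).le

lemma tendsto_rpow_nhdsGT_zero {m : ℝ} (hm : 0 < m) :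
    Tendsto (fun t : ℝ => t ^ m) (𝓝[>] 0) (𝓝 0) := by
  have h := (Real.continuousAt_rpow_const 0 m (Or.inr hm.le)).tendsto
  rw [Real.zero_rpow hm.ne'] at h
  exact h.mono_left nhdsWithin_le_nhds

lemma tendsto_id_nhdsGT_zero : Tendsto (fun t : ℝ => t) (𝓝[>] 0) (𝓝 0) :=
  tendsto_id.mono_left nhdsWithin_le_nhds

/-- The constant term of any representation of a little-oh polynomial is its limit at `0⁺`. -/
lemma tendsto_of_isLittleO_sub {x : ℝ → ℝ} {r : ℝ} {k : ℕ} {α a : Fin k → ℝ} (ha : ∀ i, 0 < a i)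
    (h : (fun t => x t - r - ∑ i, α i * t ^ (a i)) =o[𝓝[>] (0 : ℝ)] fun t => t) :
    Tendsto x (𝓝[>] 0) (𝓝 r) := by
  obtain ⟨m, hm, hO⟩ := exists_pos_isBigO_rpow α a ha
  have h1 := hO.trans_tendsto (tendsto_rpow_nhdsGT_zero hm)
  have h2 := h.trans_tendsto tendsto_id_nhdsGT_zero
  simpa using (h2.add h1).add_const r

/-- A power of `t ^ m` with total exponent larger than `1` is negligible with respect to `t`. -/
lemma isLittleO_rpow_pow {m : ℝ} {N : ℕ} (h : 1 < m * N) :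
    (fun t : ℝ => (t ^ m) ^ N) =o[𝓝[>] (0 : ℝ)] fun t => t := by
  have h1 : (fun t : ℝ => t ^ (m * N - 1) * t) =o[𝓝[>] (0 : ℝ)] fun t => 1 * t :=
    ((isLittleO_one_iff ℝ).2 (tendsto_rpow_nhdsGT_zero (sub_pos.2 h))).mul_isBigO
      (isBigO_refl _ _)
  refine h1.congr' ?_ (by simp)
  filter_upwards [self_mem_nhdsWithin] with t ht
  have ht : 0 < t := ht
  rw [← Real.rpow_mul_natCast ht.le, Real.rpow_sub_one ht.ne', div_mul_cancel₀ _ (ne_of_gt ht)]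

/-- A Fermat real is invertible iff its standard part is nonzero: for a little-oh
polynomial `x` with standard part `r`, we have `r ≠ 0` iff there is a little-oh
polynomial `y` with `x(t)·y(t) − 1 = o(t)` as `t → 0⁺`. -/
theorem littleOhPoly_invertible_iff (x : ℝ → ℝ) (r : ℝ)
    (hx : IsLittleOhPoly x)
    (hr : Filter.Tendsto x (𝓝[>] (0 : ℝ)) (𝓝 r)) :
    r ≠ 0 ↔ ∃ y : ℝ → ℝ, IsLittleOhPoly y ∧
      (fun t => x t * y t - 1) =o[𝓝[>] (0 : ℝ)] fun t => t := by
  obtain ⟨r', k, α, a, ha, hxo⟩ := hx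
  obtain rfl := tendsto_nhds_unique (tendsto_of_isLittleO_sub ha hxo) hr
  constructor
  · intro hr0
    obtain ⟨m, hm, hO⟩ := exists_pos_isBigO_rpow α a ha
    obtain ⟨N, hN⟩ := exists_nat_gt (1 / m)
    rw [div_lt_iff₀' hm] at hN
    set h : ℝ → ℝ := fun t => ∑ i, α i * t ^ (a i) with hh
    set y : ℝ → ℝ := fun t => r'⁻¹ * ∑ j ∈ Finset.range N, (-r'⁻¹ * h t) ^ j with hy
    have hyP : IsLittleOhPoly y := by
      apply isLittleOhPoly_of_mem_rpowAlgebra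
      have hmem : (fun t : Set.Ioi (0 : ℝ) => h t) ∈ rpowAlgebra := by
        have := sum_mem (t := Finset.univ)
          fun i _ => rpowAlgebra.smul_mem (rpow_mem_rpowAlgebra (ha i).le) (α i)
        convert this using 1
        ext t
        simp [hh]
      have := rpowAlgebra.smul_mem (sum_mem (t := Finset.range N)
        fun j _ => pow_mem (rpowAlgebra.smul_mem hmem (-r'⁻¹)) j) r'⁻¹
      convert this using 1
      ext t
      simp [hy]
    refine ⟨y, hyP, ?_⟩
    obtain ⟨s, l, β, b, hb, hyo⟩ := hyP
    have hy1 : y =O[𝓝[>] (0 : ℝ)] fun _ => (1 : ℝ) :=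
      (tendsto_of_isLittleO_sub hb hyo).isBigO_one ℝ
    have e1 : (fun t => (x t - r' - h t) * y t) =o[𝓝[>] (0 : ℝ)] fun t => t := by
      simpa using hxo.mul_isBigO hy1
    have e2 : (fun t => (-r'⁻¹) ^ N * h t ^ N) =o[𝓝[>] (0 : ℝ)] fun t => t :=
      ((hO.pow N).trans_isLittleO (isLittleO_rpow_pow hN)).const_mul_left _
    refine (e1.sub e2).congr_left fun t => ?_
    -- The geometric sum gives `(r' + h) y = 1 - (-h / r') ^ N`.
    have hg := mul_neg_geom_sum (-r'⁻¹ * h t) N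
    have hry : (r' + h t) * y t = 1 - (-r'⁻¹ * h t) ^ N := by
      rw [← hg, hy]
      field_simp
      ring
    rw [mul_pow] at hry
    linear_combination -hry
  · rintro ⟨y, ⟨s, l, β, b, hb, hyo⟩, hxy⟩ rfl
    have h1 := hr.mul (tendsto_of_isLittleO_sub hb hyo)
    have h2 := (hxy.trans_tendsto tendsto_id_nhdsGT_zero).add_const 1
    simp only [sub_add_cancel, zero_mul, zero_add] at h1 h2
    exact zero_ne_one (tendsto_nhds_unique h1 h2)
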